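/- Fix X₀ ∈ S^{d−1}, let Q_t be the Kac walk of length t on ℝ^d, and set X_t = Q_t X₀. Then for any ε ∈ (1/d, 1/2), any k ∈ {1,…,d}, and any t ≥ 0, P[ Σ_{i=1}^k X_t[i]² ∉ [(1−ε)k/d, (1+ε)k/d] ] ≤ 8 d⁴ exp(−t/(2d)) + 2 exp(−ε² k / 64). -/

import Mathlib

noncomputable section

open MeasureTheory Real
open scoped ENNReal

namespace KacJL

instance matrixMeasurableSpace {m n : Type*} : MeasurableSpace (Matrix m n ℝ) :=
  inferInstanceAs (MeasurableSpace (m → n → ℝ))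

/-- The rotation by angle `θ` in the `(i,j)` coordinate plane of `ℝ^d`. -/
def rotM (d : ℕ) (i j : Fin d) (θ : ℝ) : Matrix (Fin d) (Fin d) ℝ :=
  Matrix.of fun k l =>
    if k = i ∧ l = i then Real.cos θ
    else if k = i ∧ l = j then -Real.sin θ
    else if k = j ∧ l = i then Real.sin θ
    else if k = j ∧ l = j then Real.cos θ
    else if k = l then 1 else 0

/-- The uniform distribution on pairs of distinct coordinates in `Fin d`. -/
def pairUniform (d : ℕ) : Measure (Fin d × Fin d) :=
  ((d * (d - 1) : ℕ) : ℝ≥0∞)⁻¹ •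
    (Measure.count.restrict {p : Fin d × Fin d | p.1 ≠ p.2})

/-- The uniform distribution on `[0, 2π)`. -/
def angleUniform : Measure ℝ :=
  (ENNReal.ofReal (2 * Real.pi))⁻¹ • (volume.restrict (Set.Ico 0 (2 * Real.pi)))

/-- The distribution of the update variables of one step of the Kac walk. -/
def kacParam (d : ℕ) : Measure ((Fin d × Fin d) × ℝ) :=
  (pairUniform d).prod angleUniform

/-- The product `R_{i_T,j_T,θ_T} ⋯ R_{i_1,j_1,θ_1}` of the rotations determined by the
update variables `ω`. -/
def kacMatrix {d T : ℕ} (ω : Fin T → (Fin d × Fin d) × ℝ) : Matrix (Fin d) (Fin d) ℝ :=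
  ((List.ofFn fun t => rotM d (ω t).1.1 (ω t).1.2 (ω t).2).reverse).prod

/-- The law of the Kac walk of length `T` on `ℝ^d`. -/
def kacMeasure (d T : ℕ) : Measure (Matrix (Fin d) (Fin d) ℝ) :=
  Measure.map kacMatrix (Measure.pi fun _ : Fin T => kacParam d)

/-- The Euclidean norm on `ℝ^d`. -/
def l2norm {d : ℕ} (x : Fin d → ℝ) : ℝ := Real.sqrt (∑ i, x i ^ 2)

open ProbabilityTheory Function

/-- The rotation step on squared coordinates. -/
def sqA {d : ℕ} (i j : Fin d) (φ : ℝ) (p : Fin d → ℝ) : Fin d → ℝ := fun k =>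
  if k = i then (p i + p j) * Real.cos φ ^ 2
  else if k = j then (p i + p j) * Real.sin φ ^ 2 else p k

/-- The Markov operator of the chain of squared coordinates. -/
def sqW {d : ℕ} (g : (Fin d → ℝ) → ℝ≥0∞) (p : Fin d → ℝ) : ℝ≥0∞ :=
  ∫⁻ ω, g (sqA ω.1.1 ω.1.2 ω.2 p) ∂(kacParam d)

lemma rot_mulVec {d : ℕ} {i j : Fin d} (hij : i ≠ j) (θ : ℝ) (x : Fin d → ℝ) (k : Fin d) :
    ((rotM d i j θ).mulVec x) k =
      if k = i then Real.cos θ * x i - Real.sin θ * x j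
      else if k = j then Real.sin θ * x i + Real.cos θ * x j else x k := by
  unfold rotM Matrix.mulVec dotProduct
  simp only [Matrix.of_apply]
  split_ifs with h1 h2
  · subst h1
    trans ∑ l, ((if l = k then Real.cos θ * x l else 0) + (if l = j then -Real.sin θ * x l else 0))
    · refine Finset.sum_congr rfl fun l _ => ?_
      by_cases h : l = k
      · subst h; simp [hij]
      · by_cases h' : l = j
        · subst h'; simp [Ne.symm hij]
        · simp [h, h', Ne.symm h, hij]
    · rw [Finset.sum_add_distrib]
      simp; ring
  · subst h2
    trans ∑ l, ((if l = i then Real.sin θ * x l else 0) + (if l = k then Real.cos θ * x l else 0))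
    · refine Finset.sum_congr rfl fun l _ => ?_
      by_cases h : l = k
      · subst h; simp [h1]
      · by_cases h' : l = i
        · subst h'; simp [hij, Ne.symm hij]
        · simp [h, h', Ne.symm h, h1]
    · rw [Finset.sum_add_distrib]
      simp
  · simp [h1, h2]

lemma sum_ite2 {d : ℕ} {i j : Fin d} (hij : i ≠ j) (u v : ℝ) (w : Fin d → ℝ) :
    ∑ k, (if k = i then u else if k = j then v else w k) = ∑ k, w k - w i - w j + u + v := by
  have : ∀ k, (if k = i then u else if k = j then v else w k) =
      w k + (if k = i then u - w i else 0) + (if k = j then v - w j else 0) := by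
    intro k
    by_cases h : k = i
    · subst h; simp [hij]
    · by_cases h' : k = j
      · subst h'; simp [h]
      · simp [h, h']
  simp_rw [this, Finset.sum_add_distrib]
  simp; ring

lemma rot_norm {d : ℕ} {i j : Fin d} (hij : i ≠ j) (θ : ℝ) (x : Fin d → ℝ) :
    ∑ k, ((rotM d i j θ).mulVec x k) ^ 2 = ∑ k, x k ^ 2 := by
  simp_rw [rot_mulVec hij, ite_pow]
  rw [sum_ite2 hij]
  have := Real.sin_sq_add_cos_sq θ
  linear_combination (x i ^ 2 + x j ^ 2) * this

lemma sqA_sum {d : ℕ} {i j : Fin d} (hij : i ≠ j) (φ : ℝ) (p : Fin d → ℝ) :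
    ∑ k, sqA i j φ p k = ∑ k, p k := by
  unfold sqA
  rw [sum_ite2 hij]
  have := Real.sin_sq_add_cos_sq φ
  linear_combination (p i + p j) * this

lemma sqA_sq_sum {d : ℕ} {i j : Fin d} (hij : i ≠ j) (φ : ℝ) (p : Fin d → ℝ) :
    ∑ k, sqA i j φ p k ^ 2 = ∑ k, p k ^ 2 - p i ^ 2 - p j ^ 2
      + (p i + p j) ^ 2 * (3 / 4 + Real.cos (4 * φ) / 4) := by
  unfold sqA
  simp_rw [ite_pow]
  rw [sum_ite2 hij]
  have h4 : Real.cos (4 * φ) = 2 * (2 * Real.cos φ ^ 2 - 1) ^ 2 - 1 := by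
    rw [show 4 * φ = 2 * (2 * φ) by ring, Real.cos_two_mul, Real.cos_two_mul]
  rw [h4, mul_pow, mul_pow, show (Real.sin φ ^ 2) = 1 - Real.cos φ ^ 2 by
    rw [← Real.sin_sq_add_cos_sq φ]; ring]
  ring

lemma sqA_sub {d : ℕ} (i j : Fin d) (φ : ℝ) (p q : Fin d → ℝ) :
    sqA i j φ (p - q) = sqA i j φ p - sqA i j φ q := by
  ext k
  simp only [sqA, Pi.sub_apply]
  split_ifs <;> ring

lemma angle_shift (F : ℝ → ℝ≥0∞) (hF : Function.Periodic F (2 * Real.pi)) (α : ℝ) :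
    ∫⁻ θ, F (θ + α) ∂angleUniform = ∫⁻ θ, F θ ∂angleUniform := by
  have : Fact (0 < 2 * Real.pi) := ⟨Real.two_pi_pos⟩
  unfold angleUniform
  rw [lintegral_smul_measure, lintegral_smul_measure]
  congr 1
  simp_rw [Measure.restrict_congr_set (Ico_ae_eq_Ioc (μ := volume) (a := (0:ℝ)) (b := 2 * Real.pi))]
  have h1 := AddCircle.lintegral_preimage (2 * Real.pi) 0 hF.lift
  have h2 := AddCircle.lintegral_preimage (2 * Real.pi) α hF.lift
  simp only [Function.Periodic.lift_coe, zero_add] at h1 h2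
  rw [h1, ← h2]
  rw [← lintegral_indicator measurableSet_Ioc, ← lintegral_indicator measurableSet_Ioc]
  rw [← lintegral_add_right_eq_self (fun a => (Set.Ioc α (α + 2 * Real.pi)).indicator (fun a => F a) a) α]
  refine lintegral_congr fun θ => ?_
  simp only [Set.indicator, Set.mem_Ioc]
  congr 1
  apply propext
  constructor <;> rintro ⟨h, h'⟩ <;> constructor <;> linarith

lemma angle_rot {d : ℕ} {i j : Fin d} (hij : i ≠ j) (h : (Fin d → ℝ) → ℝ≥0∞) (x : Fin d → ℝ) :
    ∫⁻ θ, h (fun k => ((rotM d i j θ).mulVec x k) ^ 2) ∂angleUniform =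
      ∫⁻ θ, h (sqA i j θ (fun k => x k ^ 2)) ∂angleUniform := by
  obtain ⟨r, α, hi, hj⟩ : ∃ r α, x i = r * Real.cos α ∧ x j = r * Real.sin α :=
    ⟨‖(⟨x i, x j⟩ : ℂ)‖, Complex.arg ⟨x i, x j⟩,
      (Complex.norm_mul_cos_arg ⟨x i, x j⟩).symm, (Complex.norm_mul_sin_arg ⟨x i, x j⟩).symm⟩
  rw [← angle_shift (fun θ => h (sqA i j θ (fun k => x k ^ 2))) _ α]
  · refine lintegral_congr fun θ => ?_
    congr 1
    ext k
    rw [rot_mulVec hij]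
    unfold sqA
    have hs := Real.sin_sq_add_cos_sq α
    simp only [hi, hj]
    split_ifs
    · rw [Real.cos_add]
      linear_combination (-r^2 * (cos θ * cos α - sin θ * sin α)^2) * hs
    · rw [Real.sin_add]
      linear_combination (-r^2 * (sin θ * cos α + cos θ * sin α)^2) * hs
    · rfl
  · intro θ
    have : (sqA i j (θ + 2 * Real.pi) fun k => x k ^ 2) = sqA i j θ fun k => x k ^ 2 := by
      ext k; simp [sqA]
    simp only [this]

lemma angle_prob : IsProbabilityMeasure angleUniform := by
  constructor
  unfold angleUniform
  simp only [Measure.smul_apply, MeasurableSet.univ, Measure.restrict_apply, Set.univ_inter,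
    Real.volume_Ico, sub_zero, smul_eq_mul]
  exact ENNReal.inv_mul_cancel (by simp [Real.pi_pos]) ENNReal.ofReal_ne_top

lemma pair_lintegral (d : ℕ) (f : Fin d × Fin d → ℝ≥0∞) :
    ∫⁻ p, f p ∂(pairUniform d) = ((d * (d - 1) : ℕ) : ℝ≥0∞)⁻¹ *
      ∑ p ∈ Finset.univ.filter (fun p : Fin d × Fin d => p.1 ≠ p.2), f p := by
  unfold pairUniform
  rw [lintegral_smul_measure, smul_eq_mul, ← lintegral_indicator (Set.toFinite _).measurableSet,
    lintegral_count, tsum_fintype, Finset.sum_filter]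
  congr 1
  refine Finset.sum_congr rfl fun p _ => ?_
  simp [Set.indicator]

lemma pair_real_sum (d : ℕ) (f : Fin d × Fin d → ℝ) :
    ∑ p ∈ Finset.univ.filter (fun p : Fin d × Fin d => p.1 ≠ p.2), f p =
      ∑ i, ∑ j, f (i, j) - ∑ i, f (i, i) := by
  rw [Finset.sum_filter, Fintype.sum_prod_type, ← Finset.sum_sub_distrib]
  refine Finset.sum_congr rfl fun i _ => ?_
  have : ∀ j, (if (i, j).1 ≠ (i, j).2 then f (i, j) else 0) =
      f (i, j) - if j = i then f (i, i) else 0 := by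
    intro j
    by_cases h : j = i
    · subst h; simp
    · simp [h, Ne.symm h]
  simp_rw [this, Finset.sum_sub_distrib]
  simp

lemma pair_card {d : ℕ} (hd : 1 ≤ d) :
    ((Finset.univ.filter (fun p : Fin d × Fin d => p.1 ≠ p.2)).card) = d * (d - 1) := by
  have := pair_real_sum d (fun _ => 1)
  simp at this
  have h2 : (((Finset.univ.filter (fun p : Fin d × Fin d => ¬ p.1 = p.2)).card : ℕ) : ℝ) =
      ((d * (d - 1) : ℕ) : ℝ) := by
    rw [this]; push_cast [hd]; ring
  exact_mod_cast h2

lemma pair_prob {d : ℕ} (hd : 2 ≤ d) : IsProbabilityMeasure (pairUniform d) := by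
  constructor
  rw [← lintegral_one, pair_lintegral]
  simp only [Finset.sum_const, pair_card (show 1 ≤ d by omega), nsmul_eq_mul, mul_one]
  refine ENNReal.inv_mul_cancel ?_ (ENNReal.natCast_ne_top _)
  have : d * (d - 1) ≠ 0 := Nat.mul_ne_zero (by omega) (by omega)
  exact_mod_cast this

lemma pair_ae (d : ℕ) : ∀ᵐ p ∂(pairUniform d), p.1 ≠ p.2 := by
  rw [ae_iff, ← lintegral_indicator_one (Set.toFinite _).measurableSet, pair_lintegral]
  simp only [mul_eq_zero]
  right
  refine Finset.sum_eq_zero fun p hp => ?_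
  simp at hp
  simp [hp]

lemma sqA_meas {d : ℕ} :
    Measurable (fun z : ((Fin d × Fin d) × ℝ) × (Fin d → ℝ) => sqA z.1.1.1 z.1.1.2 z.1.2 z.2) := by
  have h : Measurable (fun z : (Fin d × Fin d) × (ℝ × (Fin d → ℝ)) =>
      sqA z.1.1 z.1.2 z.2.1 z.2.2) := by
    refine measurable_from_prod_countable_right fun p => ?_
    refine measurable_pi_lambda _ fun k => ?_
    unfold sqA
    dsimp only
    split_ifs <;> fun_prop
  exact h.comp (f := fun z : ((Fin d × Fin d) × ℝ) × (Fin d → ℝ) => (z.1.1, (z.1.2, z.2)))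
    (by fun_prop)

lemma rot_meas {d : ℕ} :
    Measurable (fun z : ((Fin d × Fin d) × ℝ) × (Fin d → ℝ) =>
      (rotM d z.1.1.1 z.1.1.2 z.1.2).mulVec z.2) := by
  have h : Measurable (fun z : (Fin d × Fin d) × (ℝ × (Fin d → ℝ)) =>
      (rotM d z.1.1 z.1.2 z.2.1).mulVec z.2.2) := by
    refine measurable_from_prod_countable_right fun p => ?_
    refine measurable_pi_lambda _ fun k => ?_
    unfold rotM Matrix.mulVec dotProduct
    refine Finset.measurable_sum _ fun l _ => ?_
    simp only [Matrix.of_apply]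
    split_ifs <;> fun_prop
  exact h.comp (f := fun z : ((Fin d × Fin d) × ℝ) × (Fin d → ℝ) => (z.1.1, (z.1.2, z.2)))
    (by fun_prop)

lemma rotM_entry_meas {d : ℕ} (k l : Fin d) :
    Measurable (fun z : (Fin d × Fin d) × ℝ => rotM d z.1.1 z.1.2 z.2 k l) := by
  refine measurable_from_prod_countable_right fun p => ?_
  unfold rotM
  simp only [Matrix.of_apply]
  split_ifs <;> fun_prop

lemma kacMatrix_succ {d T : ℕ} (ω : Fin (T + 1) → (Fin d × Fin d) × ℝ) :
    kacMatrix ω = kacMatrix (fun t => ω t.succ) * rotM d (ω 0).1.1 (ω 0).1.2 (ω 0).2 := by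
  simp [kacMatrix, List.ofFn_succ]

lemma kacMatrix_meas {d : ℕ} (T : ℕ) :
    Measurable (kacMatrix : (Fin T → (Fin d × Fin d) × ℝ) → Matrix (Fin d) (Fin d) ℝ) := by
  induction T with
  | zero => exact Subsingleton.measurable
  | succ T ih =>
    refine measurable_pi_lambda _ fun k => measurable_pi_lambda _ fun l => ?_
    simp_rw [kacMatrix_succ, Matrix.mul_apply]
    refine Finset.measurable_sum _ fun m _ => ?_
    refine Measurable.mul ?_ ?_
    · have h1 : Measurable (fun M : Matrix (Fin d) (Fin d) ℝ => M k m) :=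
        (measurable_pi_apply m).comp (measurable_pi_apply k)
      exact h1.comp (ih.comp (by fun_prop))
    · exact (rotM_entry_meas m l).comp (measurable_pi_apply 0)

lemma mulVec_meas {d : ℕ} (x : Fin d → ℝ) :
    Measurable (fun M : Matrix (Fin d) (Fin d) ℝ => M.mulVec x) := by
  refine measurable_pi_lambda _ fun k => ?_
  unfold Matrix.mulVec dotProduct
  refine Finset.measurable_sum _ fun m _ => ?_
  have h1 : Measurable (fun M : Matrix (Fin d) (Fin d) ℝ => M k m) :=
    (measurable_pi_apply m).comp (measurable_pi_apply k)
  exact h1.mul_const _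

lemma param_prob {d : ℕ} (hd : 2 ≤ d) : IsProbabilityMeasure (kacParam d) := by
  have := pair_prob hd
  have := angle_prob
  unfold kacParam
  infer_instance

lemma param_ae {d : ℕ} (hd : 2 ≤ d) : ∀ᵐ ω ∂(kacParam d), ω.1.1 ≠ ω.1.2 := by
  have := pair_prob hd
  have := angle_prob
  unfold kacParam
  exact Measure.quasiMeasurePreserving_fst.ae (pair_ae d)

lemma sqW_meas {d : ℕ} (hd : 2 ≤ d) {g : (Fin d → ℝ) → ℝ≥0∞} (hg : Measurable g) :
    Measurable (sqW g) := by
  have := param_prob hd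
  unfold sqW
  exact Measurable.lintegral_prod_left' (hg.comp sqA_meas)

lemma sqW_iter_meas {d : ℕ} (hd : 2 ≤ d) {g : (Fin d → ℝ) → ℝ≥0∞} (hg : Measurable g) (T : ℕ) :
    Measurable (sqW^[T] g) := by
  induction T with
  | zero => exact hg
  | succ T ih => rw [Function.iterate_succ_apply']; exact sqW_meas hd ih

lemma step_eq {d : ℕ} (hd : 2 ≤ d) {h : (Fin d → ℝ) → ℝ≥0∞} (hh : Measurable h) (x : Fin d → ℝ) :
    ∫⁻ ω, h (fun k => ((rotM d ω.1.1 ω.1.2 ω.2).mulVec x k) ^ 2) ∂(kacParam d) =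
      sqW h (fun k => x k ^ 2) := by
  have := pair_prob hd
  have := angle_prob
  unfold sqW kacParam
  have m1 : Measurable (fun ω : (Fin d × Fin d) × ℝ => h (fun k =>
      ((rotM d ω.1.1 ω.1.2 ω.2).mulVec x k) ^ 2)) := by
    refine hh.comp (measurable_pi_lambda _ fun k => ?_)
    exact ((measurable_pi_apply k).comp (rot_meas.comp
      (f := fun ω : (Fin d × Fin d) × ℝ => (ω, x)) (by fun_prop))).pow_const 2
  have m2 : Measurable (fun ω : (Fin d × Fin d) × ℝ =>
      h (sqA ω.1.1 ω.1.2 ω.2 (fun k => x k ^ 2))) :=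
    hh.comp (sqA_meas.comp
      (f := fun ω : (Fin d × Fin d) × ℝ => (ω, fun k => x k ^ 2)) (by fun_prop))
  rw [lintegral_prod _ m1.aemeasurable, lintegral_prod _ m2.aemeasurable]
  refine lintegral_congr_ae ?_
  filter_upwards [pair_ae d] with p hp
  exact angle_rot hp h x

lemma walk_eq {d : ℕ} (hd : 2 ≤ d) {g : (Fin d → ℝ) → ℝ≥0∞} (hg : Measurable g) (T : ℕ)
    (x : Fin d → ℝ) :
    ∫⁻ ω, g (fun k => ((kacMatrix ω).mulVec x k) ^ 2) ∂(Measure.pi fun _ : Fin T => kacParam d) =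
      (sqW^[T] g) (fun k => x k ^ 2) := by
  have := param_prob hd
  induction T generalizing x with
  | zero => simp [kacMatrix]
  | succ T ih =>
    rw [Function.iterate_succ_apply', ← step_eq hd (sqW_iter_meas hd hg T)]
    have mp := (measurePreserving_piFinSuccAbove (fun _ : Fin (T + 1) => kacParam d) 0)
    have key := mp.symm.lintegral_comp_emb (MeasurableEquiv.measurableEmbedding _)
      (fun ω => g (fun k => ((kacMatrix ω).mulVec x k) ^ 2))
    rw [← key]
    rw [lintegral_prod]
    · refine lintegral_congr fun ω0 => ?_
      rw [← ih]
      refine lintegral_congr fun ω => ?_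
      congr 1
      ext k
      rw [kacMatrix_succ, Matrix.mulVec_mulVec]
      simp [MeasurableEquiv.piFinSuccAbove]
    · refine (hg.comp (measurable_pi_lambda _ fun k => ?_)).aemeasurable
      exact ((measurable_pi_apply k).comp ((mulVec_meas x).comp
        ((kacMatrix_meas _).comp (MeasurableEquiv.measurable _)))).pow_const 2

/-- standard Gaussian measure -/
def gam (d : ℕ) : Measure (Fin d → ℝ) := Measure.pi fun _ : Fin d => gaussianReal 0 1

instance gam_prob (d : ℕ) : IsProbabilityMeasure (gam d) := by unfold gam; infer_instance

lemma gam_rot {d : ℕ} {i j : Fin d} (hij : i ≠ j) (θ : ℝ) :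
    (gam d).map ((rotM d i j θ).mulVec) = gam d := by
  let L : EuclideanSpace ℝ (Fin d) →ₗᵢ[ℝ] EuclideanSpace ℝ (Fin d) :=
    { Matrix.toEuclideanLin (rotM d i j θ) with
      norm_map' := fun x => by
        rw [EuclideanSpace.norm_eq, EuclideanSpace.norm_eq]
        congr 1
        simp only [Real.norm_eq_abs, sq_abs]
        exact rot_norm hij θ x.ofLp }
  let f := L.toLinearIsometryEquiv rfl
  have h1 : (gam d).map (WithLp.toLp 2) = stdGaussian (EuclideanSpace ℝ (Fin d)) :=
    map_pi_eq_stdGaussian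
  have m1 : Measurable (WithLp.toLp 2 : (Fin d → ℝ) → EuclideanSpace ℝ (Fin d)) := by fun_prop
  have m2 : Measurable (WithLp.ofLp : EuclideanSpace ℝ (Fin d) → (Fin d → ℝ)) := by fun_prop
  have mf : Measurable f := f.continuous.measurable
  have h2 := stdGaussian_map f
  have h3 : (rotM d i j θ).mulVec = WithLp.ofLp ∘ f ∘ WithLp.toLp 2 := by
    ext x k; rfl
  rw [h3, ← Measure.map_map m2 (mf.comp m1), ← Measure.map_map mf m1, h1, h2, ← h1,
    Measure.map_map m2 m1]
  exact Measure.map_id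

/-- normalized squares -/
def nsq {d : ℕ} (y : Fin d → ℝ) : Fin d → ℝ := fun k => y k ^ 2 / ∑ l, y l ^ 2

lemma nsq_meas {d : ℕ} : Measurable (nsq (d := d)) := by
  unfold nsq; fun_prop

lemma inv_step {d : ℕ} (hd : 2 ≤ d) {h : (Fin d → ℝ) → ℝ≥0∞} (hh : Measurable h) :
    ∫⁻ y, sqW h (nsq y) ∂(gam d) = ∫⁻ y, h (nsq y) ∂(gam d) := by
  have := param_prob hd
  have e1 : ∀ y : Fin d → ℝ, sqW h (nsq y) =
      ∫⁻ ω, h (nsq ((rotM d ω.1.1 ω.1.2 ω.2).mulVec y)) ∂(kacParam d) := by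
    intro y
    have hS : 0 ≤ ∑ l, y l ^ 2 := Finset.sum_nonneg fun _ _ => sq_nonneg _
    have : nsq y = fun k => ((Real.sqrt (∑ l, y l ^ 2))⁻¹ • y) k ^ 2 := by
      ext k
      simp only [nsq, Pi.smul_apply, smul_eq_mul, mul_pow, inv_pow, Real.sq_sqrt hS]
      rw [div_eq_inv_mul]
    rw [this, ← step_eq hd hh]
    refine lintegral_congr_ae ?_
    filter_upwards [param_ae hd] with ω hω
    congr 1
    ext k
    rw [Matrix.mulVec_smul]
    simp only [nsq, Pi.smul_apply, smul_eq_mul, mul_pow, inv_pow, Real.sq_sqrt hS, rot_norm hω]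
    rw [div_eq_inv_mul]
  simp_rw [e1]
  rw [lintegral_lintegral_swap]
  · have : ∀ᵐ ω ∂(kacParam d),
        ∫⁻ y, h (nsq ((rotM d ω.1.1 ω.1.2 ω.2).mulVec y)) ∂(gam d) =
        ∫⁻ y, h (nsq y) ∂(gam d) := by
      filter_upwards [param_ae hd] with ω hω
      conv_rhs => rw [← gam_rot hω ω.2]
      rw [lintegral_map (f := fun y => h (nsq y)) (hh.comp nsq_meas)]
      · exact rot_meas.comp (f := fun y : Fin d → ℝ => (ω, y)) (by fun_prop)
    rw [lintegral_congr_ae this]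
    simp
  · exact ((hh.comp nsq_meas).comp (rot_meas.comp measurable_swap)).aemeasurable

lemma inv_iter {d : ℕ} (hd : 2 ≤ d) {h : (Fin d → ℝ) → ℝ≥0∞} (hh : Measurable h) (T : ℕ) :
    ∫⁻ y, (sqW^[T] h) (nsq y) ∂(gam d) = ∫⁻ y, h (nsq y) ∂(gam d) := by
  induction T with
  | zero => rfl
  | succ T ih =>
    rw [Function.iterate_succ_apply', inv_step hd (sqW_iter_meas hd hh T), ih]

lemma angle_int (u v : ℝ) (hnn : ∀ θ : ℝ, 0 ≤ u + v * (3 / 4 + Real.cos (4 * θ) / 4)) :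
    ∫⁻ θ, ENNReal.ofReal (u + v * (3 / 4 + Real.cos (4 * θ) / 4)) ∂angleUniform =
      ENNReal.ofReal (u + 3 / 4 * v) := by
  have hc : Continuous (fun θ : ℝ => u + v * (3 / 4 + Real.cos (4 * θ) / 4)) := by fun_prop
  have hint : IntegrableOn (fun θ : ℝ => u + v * (3 / 4 + Real.cos (4 * θ) / 4))
      (Set.Ico 0 (2 * Real.pi)) :=
    (hc.integrableOn_Icc).mono_set Set.Ico_subset_Icc_self
  have hcos : ∫ θ in (0:ℝ)..(2 * Real.pi), Real.cos (4 * θ) = 0 := by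
    rw [intervalIntegral.integral_comp_mul_left (fun x => Real.cos x) (by norm_num : (4:ℝ) ≠ 0)]
    rw [integral_cos]
    have : Real.sin (4 * (2 * Real.pi)) = 0 := by
      have := Real.sin_nat_mul_pi 8
      rw [← this]; congr 1; push_cast; ring
    simp [this]
  have hI : ∫ θ in Set.Ico 0 (2 * Real.pi), (u + v * (3 / 4 + Real.cos (4 * θ) / 4)) =
      2 * Real.pi * (u + 3 / 4 * v) := by
    rw [integral_Ico_eq_integral_Ioo, ← integral_Ioc_eq_integral_Ioo,
      ← intervalIntegral.integral_of_le Real.two_pi_pos.le]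
    have : (fun θ : ℝ => u + v * (3 / 4 + Real.cos (4 * θ) / 4)) =
      fun θ => (u + 3 / 4 * v) + v / 4 * Real.cos (4 * θ) := by ext; ring
    rw [this, intervalIntegral.integral_add (by simp)
      (Continuous.intervalIntegrable (by fun_prop) _ _),
      intervalIntegral.integral_const_mul, hcos]
    simp
    ring
  unfold angleUniform
  rw [lintegral_smul_measure, ← ofReal_integral_eq_lintegral_ofReal hint
    (Filter.Eventually.of_forall hnn), hI, ENNReal.ofReal_mul Real.two_pi_pos.le, smul_eq_mul,
    ← mul_assoc, ENNReal.inv_mul_cancel (by simp [Real.pi_pos]) ENNReal.ofReal_ne_top, one_mul]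

lemma pair_quad {d : ℕ} (a : Fin d → ℝ) (ha : ∑ k, a k = 0) :
    ∑ p ∈ Finset.univ.filter (fun p : Fin d × Fin d => p.1 ≠ p.2),
      (∑ k, a k ^ 2 - a p.1 ^ 2 - a p.2 ^ 2 + 3 / 4 * (a p.1 + a p.2) ^ 2) =
      (d * (d - 1) - (d - 1) / 2 - 3 / 2) * ∑ k, a k ^ 2 := by
  rw [pair_real_sum]
  set S := ∑ k, a k ^ 2 with hS
  have e1 : ∀ i j, (S - a i ^ 2 - a j ^ 2 + 3 / 4 * (a i + a j) ^ 2) =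
      S - 1 / 4 * a i ^ 2 - 1 / 4 * a j ^ 2 + (3 / 2 * a i) * a j := by intros; ring
  simp only [e1, Finset.sum_add_distrib, Finset.sum_sub_distrib, ← Finset.mul_sum, ha, ← hS]
  have e2 : ∑ i, 3 / 2 * a i * a i = 3 / 2 * S := by
    rw [hS, Finset.mul_sum]; exact Finset.sum_congr rfl fun i _ => by ring
  rw [e2]
  simp [← hS, ← Finset.mul_sum]
  ring

lemma contr {d : ℕ} (hd : 2 ≤ d) (a : Fin d → ℝ) (ha : ∑ k, a k = 0) (c : ℝ) (hc : 0 ≤ c) :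
    ∫⁻ ω, ENNReal.ofReal (c * ∑ k, sqA ω.1.1 ω.1.2 ω.2 a k ^ 2) ∂(kacParam d) ≤
      ENNReal.ofReal (c * (1 - 1 / (2 * d)) * ∑ k, a k ^ 2) := by
  have := pair_prob hd
  have := angle_prob
  have hS0 : 0 ≤ ∑ k, a k ^ 2 := Finset.sum_nonneg fun _ _ => sq_nonneg _
  have hm : Measurable (fun ω : (Fin d × Fin d) × ℝ => sqA ω.1.1 ω.1.2 ω.2 a) :=
    sqA_meas.comp (f := fun ω : (Fin d × Fin d) × ℝ => (ω, a)) (by fun_prop)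
  have m1 : Measurable (fun ω : (Fin d × Fin d) × ℝ =>
      ENNReal.ofReal (c * ∑ k, sqA ω.1.1 ω.1.2 ω.2 a k ^ 2)) := by
    refine ENNReal.measurable_ofReal.comp (Measurable.const_mul ?_ c)
    exact Finset.measurable_sum _ fun k _ => ((measurable_pi_apply k).comp hm).pow_const 2
  unfold kacParam
  rw [lintegral_prod _ m1.aemeasurable, pair_lintegral]
  have hstep : ∀ p ∈ Finset.univ.filter (fun p : Fin d × Fin d => p.1 ≠ p.2),
      ∫⁻ θ, ENNReal.ofReal (c * ∑ k, sqA p.1 p.2 θ a k ^ 2) ∂angleUniform =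
      ENNReal.ofReal (c * (∑ k, a k ^ 2 - a p.1 ^ 2 - a p.2 ^ 2 + 3 / 4 * (a p.1 + a p.2) ^ 2))
      := by
    intro p hp
    have hp' : p.1 ≠ p.2 := by simpa using hp
    have e : ∀ θ, c * ∑ k, sqA p.1 p.2 θ a k ^ 2 =
        c * (∑ k, a k ^ 2 - a p.1 ^ 2 - a p.2 ^ 2) +
          (c * (a p.1 + a p.2) ^ 2) * (3 / 4 + Real.cos (4 * θ) / 4) := by
      intro θ; rw [sqA_sq_sum hp']; ring
    simp_rw [e]
    rw [angle_int]
    · congr 1; ring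
    · intro θ; rw [← e]
      exact mul_nonneg hc (Finset.sum_nonneg fun _ _ => sq_nonneg _)
  have hnn : ∀ p ∈ Finset.univ.filter (fun p : Fin d × Fin d => p.1 ≠ p.2),
      0 ≤ c * (∑ k, a k ^ 2 - a p.1 ^ 2 - a p.2 ^ 2 + 3 / 4 * (a p.1 + a p.2) ^ 2) := by
    intro p hp
    have hp' : p.1 ≠ p.2 := by simpa using hp
    refine mul_nonneg hc ?_
    have h1 : a p.1 ^ 2 + a p.2 ^ 2 ≤ ∑ k, a k ^ 2 := by
      rw [← Finset.sum_pair (f := fun k => a k ^ 2) hp']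
      exact Finset.sum_le_sum_of_subset_of_nonneg (Finset.subset_univ _)
        fun _ _ _ => sq_nonneg _
    nlinarith [sq_nonneg (a p.1 + a p.2)]
  rw [Finset.sum_congr rfl hstep, ← ENNReal.ofReal_sum_of_nonneg hnn, ← Finset.mul_sum,
    pair_quad a ha]
  have hN : (0:ℝ) < ((d * (d - 1) : ℕ) : ℝ) := by
    have : 0 < d * (d - 1) := Nat.mul_pos (by omega) (by omega)
    exact_mod_cast this
  rw [← ENNReal.ofReal_natCast, ← ENNReal.ofReal_inv_of_pos hN,
    ← ENNReal.ofReal_mul (inv_nonneg.2 hN.le)]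
  refine ENNReal.ofReal_le_ofReal ?_
  rw [inv_mul_le_iff₀ hN]
  have hd0 : (2:ℝ) ≤ d := by exact_mod_cast hd
  push_cast [show 1 ≤ d by omega]
  have hcS := mul_nonneg hc hS0
  have : (d:ℝ) * (d - 1) * (c * (1 - 1 / (2 * d)) * ∑ k, a k ^ 2) =
      (d * (d - 1) - (d - 1) / 2) * (c * ∑ k, a k ^ 2) := by
    field_simp
  rw [this]
  nlinarith

lemma coupling {d : ℕ} (hd : 2 ≤ d) {g b : (Fin d → ℝ) → ℝ≥0∞} (hb : Measurable b)
    (C : ℝ) (hC : 0 ≤ C)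
    (hbase : ∀ p q : Fin d → ℝ, ∑ k, p k = ∑ k, q k →
      g p ≤ ENNReal.ofReal (C * ∑ k, (p k - q k) ^ 2) + b q)
    (T : ℕ) (p q : Fin d → ℝ) (hpq : ∑ k, p k = ∑ k, q k) :
    (sqW^[T] g) p ≤ ENNReal.ofReal (C * (1 - 1 / (2 * d)) ^ T * ∑ k, (p k - q k) ^ 2)
      + (sqW^[T] b) q := by
  have hd0 : (2:ℝ) ≤ d := by exact_mod_cast hd
  have hρ : (0:ℝ) ≤ 1 - 1 / (2 * d) := by
    rw [sub_nonneg, div_le_one (by positivity)]; linarith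
  induction T generalizing p q with
  | zero => simpa using hbase p q hpq
  | succ T ih =>
    rw [Function.iterate_succ_apply', Function.iterate_succ_apply']
    have hbm : Measurable (fun ω : (Fin d × Fin d) × ℝ =>
        (sqW^[T] b) (sqA ω.1.1 ω.1.2 ω.2 q)) :=
      (sqW_iter_meas hd hb T).comp (sqA_meas.comp
        (f := fun ω : (Fin d × Fin d) × ℝ => (ω, q)) (by fun_prop))
    calc sqW (sqW^[T] g) p
        ≤ ∫⁻ ω, (ENNReal.ofReal (C * (1 - 1 / (2 * d)) ^ T *
            ∑ k, sqA ω.1.1 ω.1.2 ω.2 (p - q) k ^ 2)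
            + (sqW^[T] b) (sqA ω.1.1 ω.1.2 ω.2 q)) ∂(kacParam d) := by
          refine lintegral_mono_ae ?_
          filter_upwards [param_ae hd] with ω hω
          have := ih (sqA ω.1.1 ω.1.2 ω.2 p) (sqA ω.1.1 ω.1.2 ω.2 q)
            (by rw [sqA_sum hω, sqA_sum hω, hpq])
          rw [sqA_sub]
          exact this
      _ = _ := lintegral_add_right _ hbm
      _ ≤ _ := by
          refine add_le_add ?_ le_rfl
          refine (contr hd (p - q) (by simp [hpq]) _ (by positivity)).trans (le_of_eq ?_)
          rw [pow_succ]
          simp only [Pi.sub_apply]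
          congr 1; ring

lemma gauss_exp {c : ℝ} (hc : c < 1 / 2) :
    Integrable (fun x => Real.exp (c * x ^ 2)) (gaussianReal 0 1) ∧
    ∫ x, Real.exp (c * x ^ 2) ∂(gaussianReal 0 1) = (Real.sqrt (1 - 2 * c))⁻¹ := by
  have e : ∀ x : ℝ, gaussianPDFReal 0 1 x * Real.exp (c * x ^ 2) =
      (Real.sqrt (2 * Real.pi))⁻¹ * Real.exp (-(1 / 2 - c) * x ^ 2) := by
    intro x
    rw [gaussianPDFReal, mul_assoc, ← Real.exp_add]
    simp only [NNReal.coe_one, mul_one, sub_zero]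
    congr 2; ring
  have hb : 0 < 1 / 2 - c := by linarith
  constructor
  · rw [gaussianReal_of_var_ne_zero 0 one_ne_zero]
    rw [integrable_withDensity_iff (measurable_gaussianPDF 0 1)
      (Filter.Eventually.of_forall fun x => gaussianPDF_lt_top)]
    simp_rw [toReal_gaussianPDF, mul_comm _ (gaussianPDFReal 0 1 _), e]
    exact (integrable_exp_neg_mul_sq hb).const_mul _
  · rw [integral_gaussianReal_eq_integral_smul one_ne_zero]
    simp_rw [smul_eq_mul, e]
    rw [integral_const_mul, integral_gaussian, ← Real.sqrt_inv, ← Real.sqrt_mul (by positivity),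
      ← Real.sqrt_inv]
    congr 1
    have := Real.pi_pos
    have : 1 - 2 * c ≠ 0 := by linarith
    field_simp

lemma chernoff {d : ℕ} (c : Fin d → ℝ) (hc : ∀ i, c i < 1 / 2) :
    gam d {y | 0 ≤ ∑ i, c i * y i ^ 2} ≤
      ENNReal.ofReal (∏ i, (Real.sqrt (1 - 2 * c i))⁻¹) := by
  have hint : Integrable (fun y : Fin d → ℝ => ∏ i, Real.exp (c i * y i ^ 2)) (gam d) :=
    Integrable.fintype_prod (f := fun i x => Real.exp (c i * x ^ 2)) fun i => (gauss_exp (hc i)).1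
  have hval : ∫ y, ∏ i, Real.exp (c i * y i ^ 2) ∂(gam d) = ∏ i, (Real.sqrt (1 - 2 * c i))⁻¹ := by
    unfold gam
    rw [integral_fintype_prod_eq_prod (fun i x => Real.exp (c i * x ^ 2))]
    exact Finset.prod_congr rfl fun i _ => (gauss_exp (hc i)).2
  rw [← hval, ofReal_integral_eq_lintegral_ofReal hint
    (Filter.Eventually.of_forall fun y => Finset.prod_nonneg fun i _ => (Real.exp_pos _).le)]
  have hm : MeasurableSet {y : Fin d → ℝ | 0 ≤ ∑ i, c i * y i ^ 2} :=
    measurableSet_le measurable_const (by fun_prop)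
  rw [← lintegral_indicator_one hm]
  refine lintegral_mono fun y => ?_
  by_cases hy : y ∈ {y : Fin d → ℝ | 0 ≤ ∑ i, c i * y i ^ 2}
  · rw [Set.indicator_of_mem hy, ← Real.exp_sum]
    simp only [Pi.one_apply, ENNReal.one_le_ofReal]
    exact Real.one_le_exp hy
  · rw [Set.indicator_of_notMem hy]; exact zero_le

lemma inv_sqrt_le {s τ : ℝ} (hs : 0 < s) (h : 1 ≤ s * Real.exp (2 * τ)) :
    (Real.sqrt s)⁻¹ ≤ Real.exp τ := by
  have h1 : (Real.sqrt s * Real.exp τ) ^ 2 = s * Real.exp (2 * τ) := by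
    rw [mul_pow, Real.sq_sqrt hs.le, ← Real.exp_nat_mul]; norm_num
  have h2 : 0 < Real.sqrt s := Real.sqrt_pos.2 hs
  have h3 : 1 ≤ Real.sqrt s * Real.exp τ := by
    have : 0 ≤ Real.sqrt s * Real.exp τ := by positivity
    nlinarith
  rw [inv_le_iff_one_le_mul₀ h2]
  linarith

lemma exp_quad {δ : ℝ} (h1 : -(1 / 4) ≤ δ) (h2 : δ ≤ 1 / 4) :
    1 + δ ≤ Real.exp (δ - δ ^ 2 / 8) := by
  have h := Real.add_one_le_exp ((δ - δ ^ 2 / 8) / 2)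
  have e : Real.exp (δ - δ ^ 2 / 8) = Real.exp ((δ - δ ^ 2 / 8) / 2) ^ 2 := by
    rw [← Real.exp_nat_mul]; congr 1; push_cast; ring
  rw [e]
  have h3 : (1 + (δ - δ ^ 2 / 8) / 2) ^ 2 ≤ Real.exp ((δ - δ ^ 2 / 8) / 2) ^ 2 := by
    apply pow_le_pow_left₀ _ (by linarith)
    nlinarith
  refine le_trans ?_ h3
  have : (1 / 2 : ℝ) ≤ (1 - δ / 8) ^ 2 := by nlinarith
  nlinarith [mul_le_mul_of_nonneg_left this (sq_nonneg δ)]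

lemma tail {d k : ℕ} (hk₁ : 1 ≤ k) (hk₂ : k ≤ d) {δ : ℝ} (h1 : -(1 / 4) ≤ δ) (h2 : δ ≤ 1 / 4)
    (hδ : (1 + δ) * k < d) :
    gam d {y | 0 ≤ δ * (d * ∑ i ∈ Finset.univ.filter (fun i : Fin d => (i : ℕ) < k), y i ^ 2
      - (1 + δ) * k * ∑ i, y i ^ 2)} ≤ ENNReal.ofReal (Real.exp (-(δ ^ 2 * k) / 16)) := by
  have hβ : 0 < 1 + δ := by linarith
  have hD : 0 < (d:ℝ) - (1 + δ) * k := by linarith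
  have hk0 : (1:ℝ) ≤ k := by exact_mod_cast hk₁
  have hkd : (k:ℝ) ≤ d := by exact_mod_cast hk₂
  set c1 : ℝ := (1 - 1 / (1 + δ)) / 2 with hc1
  set c2 : ℝ := -(k * δ) / (2 * (d - (1 + δ) * k)) with hc2
  have e1 : 1 - 2 * c1 = 1 / (1 + δ) := by rw [hc1]; ring
  have e2 : 1 - 2 * c2 = (d - k) / (d - (1 + δ) * k) := by
    have hD' := hD.ne'
    rw [hc2, eq_div_iff hD']
    generalize hDD : (d:ℝ) - (1 + δ) * k = D at *
    field_simp
    linear_combination -hDD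
  set c : Fin d → ℝ := fun i => if (i : ℕ) < k then c1 else c2 with hcdef
  have hltd : ∀ i : Fin d, ¬ (i : ℕ) < k → (k:ℝ) < d := by
    intro i hi
    have := i.2
    have : k < d := by omega
    exact_mod_cast this
  have hpos : ∀ i, 0 < 1 - 2 * c i := by
    intro i
    simp only [hcdef]
    split_ifs with hi
    · rw [e1]; positivity
    · rw [e2]; exact div_pos (by linarith [hltd i hi]) hD
  have hsum : ∀ (y : Fin d → ℝ), ∑ i, c i * y i ^ 2 = (2 * (1 + δ) * (d - (1 + δ) * k))⁻¹ *
      (δ * (d * ∑ i ∈ Finset.univ.filter (fun i : Fin d => (i : ℕ) < k), y i ^ 2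
      - (1 + δ) * k * ∑ i, y i ^ 2)) := by
    intro y
    have hA : ∑ i, c i * y i ^ 2 = c2 * ∑ i, y i ^ 2 + (c1 - c2) *
        ∑ i ∈ Finset.univ.filter (fun i : Fin d => (i : ℕ) < k), y i ^ 2 := by
      rw [Finset.sum_filter, Finset.mul_sum, Finset.mul_sum, ← Finset.sum_add_distrib]
      refine Finset.sum_congr rfl fun i _ => ?_
      simp only [hcdef]
      split_ifs <;> ring
    rw [hA, hc1, hc2]
    have hD' := hD.ne'
    have hdD : (d:ℝ) = (d - (1 + δ) * k) + (1 + δ) * k := by ring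
    generalize (d:ℝ) - (1 + δ) * k = D at *
    rw [hdD]
    field_simp
    ring
  have hsub : {y : Fin d → ℝ | 0 ≤ δ * (d * ∑ i ∈ Finset.univ.filter
      (fun i : Fin d => (i : ℕ) < k), y i ^ 2 - (1 + δ) * k * ∑ i, y i ^ 2)} ⊆
      {y | 0 ≤ ∑ i, c i * y i ^ 2} := by
    intro y hy
    simp only [Set.mem_ofPred_eq] at hy ⊢
    rw [hsum]
    exact mul_nonneg (by positivity) hy
  refine (measure_mono hsub).trans ((chernoff c fun i => by linarith [hpos i]).trans ?_)
  refine ENNReal.ofReal_le_ofReal ?_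
  have hfac : ∀ i, (Real.sqrt (1 - 2 * c i))⁻¹ ≤
      Real.exp (if (i : ℕ) < k then (δ - δ ^ 2 / 8) / 2 else -(δ * k / (d - k)) / 2) := by
    intro i
    refine inv_sqrt_le (hpos i) ?_
    simp only [hcdef]
    split_ifs with hi
    · rw [e1, mul_div_cancel₀ _ (two_ne_zero), one_div, ← div_eq_inv_mul, le_div_iff₀ hβ, one_mul]
      exact exp_quad h1 h2
    · have hdk := hltd i hi
      have hdk' : 0 < (d:ℝ) - k := by linarith
      rw [e2, mul_div_cancel₀ _ (two_ne_zero), div_mul_eq_mul_div, le_div_iff₀ hD, one_mul]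
      have := Real.add_one_le_exp (-(δ * k / (d - k)))
      calc (d:ℝ) - (1 + δ) * k = (d - k) * (-(δ * k / (d - k)) + 1) := by field_simp; ring
        _ ≤ _ := mul_le_mul_of_nonneg_left this hdk'.le
  refine (Finset.prod_le_prod (fun i _ => by positivity) fun i _ => hfac i).trans ?_
  rw [← Real.exp_sum]
  refine Real.exp_le_exp.2 ?_
  have hcard : (Finset.univ.filter (fun i : Fin d => (i : ℕ) < k)).card = k := by
    rw [Fin.card_filter_val_lt]; omega
  have hcard2 : ((Finset.univ.filter (fun i : Fin d => ¬ (i : ℕ) < k)).card : ℝ) = d - k := by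
    have := Finset.card_filter_add_card_filter_not (s := (Finset.univ : Finset (Fin d)))
      (fun i : Fin d => (i : ℕ) < k)
    rw [hcard] at this
    simp only [Finset.card_univ, Fintype.card_fin] at this
    rw [eq_sub_iff_add_eq, add_comm]
    exact_mod_cast this
  rw [Finset.sum_ite, Finset.sum_const, Finset.sum_const, hcard, nsmul_eq_mul, nsmul_eq_mul, hcard2]
  rcases eq_or_lt_of_le hkd with h | h
  · rw [← h]
    have : δ < 0 := by rw [← h] at hδ; nlinarith
    simp only [sub_self, zero_mul, add_zero]
    nlinarith
  · have : (d:ℝ) - k ≠ 0 := by linarith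
    apply le_of_eq
    field_simp
    ring

lemma gam_sum_ne {d : ℕ} (hd : 2 ≤ d) : ∀ᵐ y ∂(gam d), ∑ l, y l ^ 2 ≠ 0 := by
  have := nullSingletonClass_gaussianReal (μ := 0) (v := 1) one_ne_zero
  let i0 : Fin d := ⟨0, by omega⟩
  have hmp : MeasurePreserving (Function.eval i0) (gam d) (gaussianReal 0 1) :=
    measurePreserving_eval (fun _ : Fin d => gaussianReal 0 1) i0
  have h0 : ∀ᵐ x ∂(gaussianReal 0 1), x ≠ 0 := by
    rw [ae_iff]; simp
  have := hmp.quasiMeasurePreserving.ae h0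
  filter_upwards [this] with y hy h
  rw [Finset.sum_eq_zero_iff_of_nonneg fun _ _ => sq_nonneg _] at h
  exact hy (pow_eq_zero_iff (two_ne_zero) |>.1 (h i0 (Finset.mem_univ _)))

/-- the bad set for squared coordinates -/
def badSet (d k : ℕ) (ε : ℝ) : Set (Fin d → ℝ) :=
  {p | ∑ i ∈ Finset.univ.filter (fun i : Fin d => (i : ℕ) < k), p i ∉
    Set.Icc ((1 - ε) * k / d) ((1 + ε) * k / d)}

lemma badSet_meas (d k : ℕ) (ε : ℝ) : MeasurableSet (badSet d k ε) := by
  have : Measurable (fun p : Fin d → ℝ =>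
      ∑ i ∈ Finset.univ.filter (fun i : Fin d => (i : ℕ) < k), p i) := by fun_prop
  exact (this measurableSet_Icc).compl

lemma gam_bad {d k : ℕ} (hk₁ : 1 ≤ k) (hk₂ : k ≤ d) {δ : ℝ} (h1 : 0 < δ) (h2 : δ ≤ 1 / 4) :
    gam d (nsq ⁻¹' badSet d k δ) ≤ ENNReal.ofReal (2 * Real.exp (-(δ ^ 2 * k) / 16)) := by
  have hk0 : (1:ℝ) ≤ k := by exact_mod_cast hk₁
  have hkd : (k:ℝ) ≤ d := by exact_mod_cast hk₂
  have hd0 : (0:ℝ) < d := by linarith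
  set E := ENNReal.ofReal (Real.exp (-(δ ^ 2 * k) / 16)) with hE
  set A : (Fin d → ℝ) → ℝ :=
    fun y => ∑ i ∈ Finset.univ.filter (fun i : Fin d => (i : ℕ) < k), y i ^ 2 with hA
  have hsumA : ∀ y, ∑ i ∈ Finset.univ.filter (fun i : Fin d => (i : ℕ) < k), nsq y i =
      A y / ∑ i, y i ^ 2 := by
    intro y; simp only [nsq, hA, Finset.sum_div]
  have hA0 : ∀ y, 0 ≤ A y := fun y => Finset.sum_nonneg fun _ _ => sq_nonneg _
  have hAS : ∀ y, A y ≤ ∑ i, y i ^ 2 := fun y =>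
    Finset.sum_le_sum_of_subset_of_nonneg (Finset.subset_univ _) fun _ _ _ => sq_nonneg _
  have hS0 : ∀ y : Fin d → ℝ, 0 ≤ ∑ i, y i ^ 2 := fun y => Finset.sum_nonneg fun _ _ => sq_nonneg _
  have hU : gam d {y | (1 + δ) * k / d < A y / ∑ i, y i ^ 2} ≤ E := by
    by_cases hc : (1 + δ) * k < d
    · refine (measure_mono ?_).trans (tail hk₁ hk₂ (by linarith) h2 hc)
      intro y hy
      simp only [Set.mem_ofPred_eq] at hy ⊢
      rcases (hS0 y).eq_or_lt with h | h
      · rw [← h] at hy; simp only [div_zero] at hy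
        have : 0 < (1 + δ) * k / d := by positivity
        linarith
      · rw [div_lt_div_iff₀ hd0 h] at hy
        refine mul_nonneg h1.le ?_
        change 0 ≤ (d:ℝ) * A y - _
        linarith
    · have : {y : Fin d → ℝ | (1 + δ) * k / d < A y / ∑ i, y i ^ 2} = ∅ := by
        ext y
        simp only [Set.mem_ofPred_eq, Set.mem_empty_iff_false, iff_false, not_lt]
        have g1 : A y / ∑ i, y i ^ 2 ≤ 1 := div_le_one_of_le₀ (hAS y) (hS0 y)
        have g2 : 1 ≤ (1 + δ) * k / d := by rw [le_div_iff₀ hd0]; linarith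
        linarith
      rw [this]; simp
  have hL : gam d {y | A y / ∑ i, y i ^ 2 < (1 - δ) * k / d} ≤ E := by
    have t := tail hk₁ hk₂ (δ := -δ) (by linarith) (by linarith) (by nlinarith)
    rw [neg_sq] at t
    refine (measure_mono ?_).trans t
    intro y hy
    simp only [Set.mem_ofPred_eq] at hy ⊢
    change 0 ≤ -δ * ((d:ℝ) * A y - _)
    rcases (hS0 y).eq_or_lt with h | h
    · have : A y = 0 := le_antisymm (h ▸ hAS y) (hA0 y)
      rw [← h, this]; simp
    · rw [div_lt_div_iff₀ h hd0] at hy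
      rw [neg_mul, ← mul_neg]
      refine mul_nonneg h1.le ?_
      linarith
  have hsub : nsq ⁻¹' badSet d k δ ⊆ {y | A y / ∑ i, y i ^ 2 < (1 - δ) * k / d} ∪
      {y | (1 + δ) * k / d < A y / ∑ i, y i ^ 2} := by
    intro y hy
    simp only [badSet, Set.mem_preimage, Set.mem_ofPred_eq, hsumA, Set.mem_Icc, not_and_or,
      not_le] at hy
    exact hy
  refine (measure_mono hsub).trans ((measure_union_le _ _).trans ((add_le_add hL hU).trans ?_))
  rw [hE, ← ENNReal.ofReal_add (by positivity) (by positivity), two_mul]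

lemma base {d k : ℕ} (hk₁ : 1 ≤ k) (hk₂ : k ≤ d) {ε : ℝ} (h1 : 0 < ε) (p q : Fin d → ℝ) :
    (badSet d k ε).indicator 1 p ≤
      ENNReal.ofReal (4 * d ^ 2 / (ε ^ 2 * k) * ∑ l, (p l - q l) ^ 2) +
        (badSet d k (ε / 2)).indicator 1 q := by
  have hk0 : (1:ℝ) ≤ k := by exact_mod_cast hk₁
  have hkd : (k:ℝ) ≤ d := by exact_mod_cast hk₂
  have hd0 : (0:ℝ) < d := by linarith
  by_cases hp : p ∈ badSet d k ε
  swap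
  · rw [Set.indicator_of_notMem hp]; exact zero_le
  by_cases hq : q ∈ badSet d k (ε / 2)
  · rw [Set.indicator_of_mem hp, Set.indicator_of_mem hq]; exact le_add_self
  rw [Set.indicator_of_mem hp, Set.indicator_of_notMem hq, add_zero]
  simp only [Pi.one_apply, ENNReal.one_le_ofReal]
  simp only [badSet, Set.mem_ofPred_eq, Set.mem_Icc, not_and_or, not_le] at hp hq
  set F := Finset.univ.filter (fun i : Fin d => (i : ℕ) < k) with hF
  have hcard : F.card = k := by
    rw [hF, Fin.card_filter_val_lt]; omega
  have hsq : (∑ i ∈ F, (p i - q i)) ^ 2 ≤ k * ∑ l, (p l - q l) ^ 2 := by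
    refine (sq_sum_le_card_mul_sum_sq).trans ?_
    rw [hcard]
    refine mul_le_mul_of_nonneg_left ?_ (by positivity)
    exact Finset.sum_le_sum_of_subset_of_nonneg (Finset.subset_univ _) fun _ _ _ => sq_nonneg _
  have hlow : (ε * k / (2 * d)) ^ 2 ≤ (∑ i ∈ F, (p i - q i)) ^ 2 := by
    rw [Finset.sum_sub_distrib]
    have hpos : 0 < ε * k / (2 * d) := by positivity
    have i1 : (1 - ε / 2) * k / d = (1 - ε) * k / d + ε * k / (2 * d) := by field_simp; ring
    have i2 : (1 + ε / 2) * k / d = (1 + ε) * k / d - ε * k / (2 * d) := by field_simp; ring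
    rw [i1, i2] at hq
    push Not at hq
    rcases hp with hp | hp
    · nlinarith [hq.1]
    · nlinarith [hq.2]
  have := hlow.trans hsq
  have e : (1:ℝ) = 4 * d ^ 2 / (ε ^ 2 * k) * ((ε * k / (2 * d)) ^ 2 / k) := by
    field_simp; norm_num
  calc (1:ℝ) = 4 * d ^ 2 / (ε ^ 2 * k) * ((ε * k / (2 * d)) ^ 2 / k) := e
    _ ≤ _ := by
      refine mul_le_mul_of_nonneg_left ?_ (by positivity)
      rw [div_le_iff₀ (by linarith)]
      linarith

/-- **Lemma 3.4(1)**: concentration for sums of squares of the first `k` coordinates of the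
Kac walk applied to a fixed unit vector. -/
theorem kac_first_coords_concentration
    {d : ℕ} (X₀ : Fin d → ℝ) (hX₀ : ∑ i, X₀ i ^ 2 = 1)
    (ε : ℝ) (hε₁ : 1 / d < ε) (hε₂ : ε < 1 / 2)
    (k : ℕ) (hk₁ : 1 ≤ k) (hk₂ : k ≤ d) (t : ℕ) :
    kacMeasure d t {Q : Matrix (Fin d) (Fin d) ℝ |
        ∑ i ∈ Finset.univ.filter (fun i : Fin d => (i : ℕ) < k), (Q.mulVec X₀ i) ^ 2 ∉
          Set.Icc ((1 - ε) * k / d) ((1 + ε) * k / d)} ≤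
      ENNReal.ofReal (8 * d ^ 4 * Real.exp (-(t : ℝ) / (2 * d)) +
        2 * Real.exp (-(ε ^ 2 * k) / 64)) := by
  have hk0 : (1:ℝ) ≤ k := by exact_mod_cast hk₁
  have hkd : (k:ℝ) ≤ d := by exact_mod_cast hk₂
  have hd0 : (0:ℝ) < d := by linarith
  have hε0 : 0 < ε := lt_trans (by positivity) hε₁
  have hεd : 1 < ε * d := by rwa [div_lt_iff₀ hd0] at hε₁
  have hd : 2 ≤ d := by
    have : (2:ℝ) < d := by nlinarith
    exact_mod_cast this.le
  set g : (Fin d → ℝ) → ℝ≥0∞ := (badSet d k ε).indicator 1 with hg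
  set b : (Fin d → ℝ) → ℝ≥0∞ := (badSet d k (ε / 2)).indicator 1 with hb
  have hgm : Measurable g := measurable_one.indicator (badSet_meas d k ε)
  have hbm : Measurable b := measurable_one.indicator (badSet_meas d k (ε / 2))
  -- the probability as an iterate of the Markov operator
  have hsqm : Measurable (fun Q : Matrix (Fin d) (Fin d) ℝ => fun i => (Q.mulVec X₀ i) ^ 2) :=
    measurable_pi_lambda _ fun i => ((measurable_pi_apply i).comp (mulVec_meas X₀)).pow_const 2
  have hprob : kacMeasure d t {Q : Matrix (Fin d) (Fin d) ℝ |
        ∑ i ∈ Finset.univ.filter (fun i : Fin d => (i : ℕ) < k), (Q.mulVec X₀ i) ^ 2 ∉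
          Set.Icc ((1 - ε) * k / d) ((1 + ε) * k / d)} =
      (sqW^[t] g) (fun i => X₀ i ^ 2) := by
    rw [← walk_eq hd hgm t X₀]
    have hset : MeasurableSet {Q : Matrix (Fin d) (Fin d) ℝ |
        ∑ i ∈ Finset.univ.filter (fun i : Fin d => (i : ℕ) < k), (Q.mulVec X₀ i) ^ 2 ∉
          Set.Icc ((1 - ε) * k / d) ((1 + ε) * k / d)} := hsqm (badSet_meas d k ε)
    unfold kacMeasure
    rw [Measure.map_apply (kacMatrix_meas t) hset,
      ← lintegral_indicator_one (kacMatrix_meas t hset)]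
    rfl
  rw [hprob]
  set C : ℝ := 4 * d ^ 2 / (ε ^ 2 * k) with hC
  have hC0 : 0 ≤ C := by positivity
  set ρ : ℝ := (1 - 1 / (2 * d)) ^ t with hρ
  have hd2 : (2:ℝ) ≤ d := by exact_mod_cast hd
  have hr0 : (0:ℝ) ≤ 1 - 1 / (2 * d) := by
    rw [sub_nonneg, div_le_one (by positivity)]; linarith
  have hρ0 : 0 ≤ ρ := pow_nonneg hr0 t
  have hy : ∀ᵐ y ∂(gam d), (sqW^[t] g) (fun i => X₀ i ^ 2) ≤
      ENNReal.ofReal (C * ρ * 2) + (sqW^[t] b) (nsq y) := by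
    filter_upwards [gam_sum_ne hd] with y hy
    have hs1 : ∑ i, nsq y i = 1 := by
      simp only [nsq, ← Finset.sum_div]; exact div_self hy
    have hn : ∀ i, 0 ≤ nsq y i := fun i =>
      div_nonneg (sq_nonneg _) (Finset.sum_nonneg fun _ _ => sq_nonneg _)
    refine (coupling hd hbm C hC0 (fun p q _ => base hk₁ hk₂ hε0 p q) t _ (nsq y)
      (by rw [hX₀, hs1])).trans (add_le_add (ENNReal.ofReal_le_ofReal ?_) le_rfl)
    refine mul_le_mul_of_nonneg_left ?_ (by positivity)
    calc ∑ i, (X₀ i ^ 2 - nsq y i) ^ 2 ≤ ∑ i, (X₀ i ^ 2 + nsq y i) := by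
          refine Finset.sum_le_sum fun i _ => ?_
          have a1 : X₀ i ^ 2 ≤ 1 := hX₀ ▸ Finset.single_le_sum (f := fun i => X₀ i ^ 2)
            (fun _ _ => sq_nonneg _) (Finset.mem_univ i)
          have a2 : nsq y i ≤ 1 := hs1 ▸ Finset.single_le_sum (f := fun i => nsq y i)
            (fun i _ => hn i) (Finset.mem_univ i)
          have a3 := hn i
          have a4 := sq_nonneg (X₀ i)
          generalize X₀ i ^ 2 = u at *
          generalize nsq y i = v at *
          nlinarith [mul_nonneg a3 a4]
      _ = 2 := by rw [Finset.sum_add_distrib, hX₀, hs1]; norm_num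
  have hint : (sqW^[t] g) (fun i => X₀ i ^ 2) ≤
      ENNReal.ofReal (C * ρ * 2) + gam d (nsq ⁻¹' badSet d k (ε / 2)) := by
    calc (sqW^[t] g) (fun i => X₀ i ^ 2)
        = ∫⁻ _, (sqW^[t] g) (fun i => X₀ i ^ 2) ∂(gam d) := by simp
      _ ≤ ∫⁻ y, (ENNReal.ofReal (C * ρ * 2) + (sqW^[t] b) (nsq y)) ∂(gam d) :=
          lintegral_mono_ae hy
      _ = ENNReal.ofReal (C * ρ * 2) + ∫⁻ y, b (nsq y) ∂(gam d) := by
          rw [lintegral_add_left measurable_const, inv_iter hd hbm t]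
          simp
      _ = _ := by
          rw [← lintegral_indicator_one (nsq_meas (badSet_meas d k (ε / 2)))]
          rfl
  refine hint.trans ?_
  refine (add_le_add le_rfl (gam_bad hk₁ hk₂ (half_pos hε0) (by linarith))).trans ?_
  rw [← ENNReal.ofReal_add (by positivity) (by positivity)]
  refine ENNReal.ofReal_le_ofReal ?_
  have b1 : C * 2 ≤ 8 * d ^ 4 := by
    rw [hC, div_mul_eq_mul_div, div_le_iff₀ (by positivity)]
    have : 1 ≤ (ε * d) ^ 2 := by nlinarith
    have h2 : 1 ≤ (ε * d) ^ 2 * k := by nlinarith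
    have h3 : (0:ℝ) ≤ 8 * d ^ 2 := by positivity
    nlinarith [mul_le_mul_of_nonneg_left h2 h3]
  have b2 : ρ ≤ Real.exp (-(t : ℝ) / (2 * d)) := by
    have h := Real.add_one_le_exp (-(1 / (2 * (d:ℝ))))
    have e : Real.exp (-(t : ℝ) / (2 * d)) = Real.exp (-(1 / (2 * (d:ℝ)))) ^ t := by
      rw [← Real.exp_nat_mul]; congr 1; ring
    rw [e, hρ]
    exact pow_le_pow_left₀ hr0 (by linarith) t
  have b3 : -((ε / 2) ^ 2 * k) / 16 = -(ε ^ 2 * k) / 64 := by ring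
  rw [b3]
  have := mul_le_mul b1 b2 hρ0 (by positivity)
  linarith

end KacJL
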